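/- Ultraspherical Poincaré inequality (spectral gap): let n ≥ 1. For every continuously differentiable function g on [−1,1], ∫_{−1}^{1} |g'(x)|² ν(x) dν_n(x) ≥ n ∫_{−1}^{1} |g − ḡ|² dν_n, where ḡ = ∫_{−1}^{1} g dν_n. -/

import Mathlib

open MeasureTheory Real

noncomputable section

/-- The normalization constant `Z_d = √π Γ(d/2)/Γ((d+1)/2)`. -/
def Zd (d : ℕ) : ℝ := Real.sqrt π * Real.Gamma ((d : ℝ) / 2) / Real.Gamma (((d : ℝ) + 1) / 2)

/-- The probability measure `dν_d(x) = Z_d⁻¹ (1 − x²)^{d/2−1} dx` on `(−1,1)`. -/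
def nuMeas (d : ℕ) : Measure ℝ :=
  (volume.restrict (Set.Ioo (-1 : ℝ) 1)).withDensity
    fun x => ENNReal.ofReal ((1 - x ^ 2) ^ ((d : ℝ) / 2 - 1) / Zd d)

/-! Let `H` be a primitive of `g' ^ 2`. By Cauchy–Schwarz `(g x - g y)² ≤ (x - y) (H x - H y)`;
integrating over two independent variables gives `Var g ≤ Cov(x, H)`. Since
`d/dx (1 - x²)^(d/2) = -d x (1 - x²)^(d/2 - 1)`, integrating by parts turns `d · Cov(x, H)` into
`∫ g'² (1 - x²)`. -/

open Set ProbabilityTheory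

section Covariance

variable {Ω Ω' : Type*} {mΩ : MeasurableSpace Ω} {mΩ' : MeasurableSpace Ω'}
  {μ : Measure Ω} {G X Y : Ω → ℝ}

lemma covariance_comp_fst_prod (ν : Measure Ω') [IsProbabilityMeasure ν]
    (hX : AEStronglyMeasurable X μ) (hY : AEStronglyMeasurable Y μ) :
    cov[fun p ↦ X p.1, fun p ↦ Y p.1; μ.prod ν] = cov[X, Y; μ] := by
  simpa using (covariance_map_fun (μ := μ.prod ν) (Z := Prod.fst) (by simpa using hX)
    (by simpa using hY) (by fun_prop)).symm

lemma covariance_comp_snd_prod (ν : Measure Ω') [IsProbabilityMeasure ν] [SFinite μ]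
    (hX : AEStronglyMeasurable X μ) (hY : AEStronglyMeasurable Y μ) :
    cov[fun p ↦ X p.2, fun p ↦ Y p.2; ν.prod μ] = cov[X, Y; μ] := by
  simpa using (covariance_map_fun (μ := ν.prod μ) (Z := Prod.snd) (by simpa using hX)
    (by simpa using hY) (by fun_prop)).symm

variable [IsProbabilityMeasure μ]

lemma integral_prod_sub_mul_sub (hX : MemLp X 2 μ) (hY : MemLp Y 2 μ) :
    ∫ p, (X p.1 - X p.2) * (Y p.1 - Y p.2) ∂μ.prod μ = 2 * cov[X, Y; μ] := by
  have integral_sub_eq_zero {Z : Ω → ℝ} (hZ : MemLp Z 2 μ) :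
      ∫ p, (Z p.1 - Z p.2) ∂μ.prod μ = 0 := by
    rw [integral_sub ((hZ.comp_fst μ).integrable one_le_two)
      ((hZ.comp_snd μ).integrable one_le_two), integral_fun_fst, integral_fun_snd, sub_self]
  calc ∫ p, (X p.1 - X p.2) * (Y p.1 - Y p.2) ∂μ.prod μ
      = cov[fun p ↦ X p.1 - X p.2, fun p ↦ Y p.1 - Y p.2; μ.prod μ] := by
        simp only [covariance, integral_sub_eq_zero hX, integral_sub_eq_zero hY, sub_zero]
    _ = 2 * cov[X, Y; μ] := by
        rw [covariance_fun_sub_fun_sub (hX.comp_fst μ) (hX.comp_snd μ) (hY.comp_fst μ)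
            (hY.comp_snd μ), covariance_fst_snd_prod hX hY, covariance_comm fun p : Ω × Ω ↦ X p.2,
          covariance_fst_snd_prod hY hX, covariance_comp_fst_prod μ hX.1 hY.1,
          covariance_comp_snd_prod μ hX.1 hY.1]
        ring

lemma variance_le_covariance_of_sq_sub_le (hG : MemLp G 2 μ) (hX : MemLp X 2 μ)
    (hY : MemLp Y 2 μ)
    (h : ∀ᵐ p ∂μ.prod μ, (G p.1 - G p.2) ^ 2 ≤ (X p.1 - X p.2) * (Y p.1 - Y p.2)) :
    Var[G; μ] ≤ cov[X, Y; μ] := by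
  have memLp_sub {Z : Ω → ℝ} (hZ : MemLp Z 2 μ) :
      MemLp (fun p ↦ Z p.1 - Z p.2) 2 (μ.prod μ) := (hZ.comp_fst μ).sub (hZ.comp_snd μ)
  have hprod := integral_mono_ae (memLp_sub hG).integrable_sq
    ((memLp_sub hX).integrable_mul (memLp_sub hY)) h
  simp only [sq, Pi.mul_apply, integral_prod_sub_mul_sub hG hG,
    integral_prod_sub_mul_sub hX hY, covariance_self hG.aemeasurable] at hprod
  linarith

end Covariance

lemma sq_sub_le_sub_mul_sub_of_hasDerivAt_sq {D : Set ℝ} (hD : Convex ℝ D) {g g' H : ℝ → ℝ}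
    (hg : ContinuousOn g D) (hH : ContinuousOn H D)
    (hg' : ∀ x ∈ interior D, HasDerivAt g (g' x) x)
    (hH' : ∀ x ∈ interior D, HasDerivAt H (g' x ^ 2) x) {x y : ℝ} (hx : x ∈ D) (hy : y ∈ D) :
    (g x - g y) ^ 2 ≤ (x - y) * (H x - H y) := by
  wlog hyx : y ≤ x generalizing x y
  · linarith [this hy hx (le_of_not_ge hyx)]
  have quadratic_nonneg (c : ℝ) :
      0 ≤ (x - y) * (c * c) + -2 * (g x - g y) * c + (H x - H y) := by
    have hmono : MonotoneOn (fun t ↦ c ^ 2 * t - 2 * c * g t + H t) D := by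
      refine monotoneOn_of_hasDerivWithinAt_nonneg hD (by fun_prop) (fun t ht ↦ ?_)
        fun t _ ↦ sq_nonneg (g' t - c)
      exact (((((hasDerivAt_id t).const_mul (c ^ 2)).sub ((hg' t ht).const_mul (2 * c))).add
        (hH' t ht)).congr_deriv (by ring)).hasDerivWithinAt
    linarith [hmono hy hx hyx]
  have hdiscrim := discrim_le_zero quadratic_nonneg
  rw [discrim] at hdiscrim
  linarith

lemma variance_le_covariance_id_of_hasDerivAt_sq {μ : Measure ℝ} [IsProbabilityMeasure μ]
    {D : Set ℝ} (hD : Convex ℝ D) (hμ : ∀ᵐ x ∂μ, x ∈ D) {g g' H : ℝ → ℝ}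
    (hg : ContinuousOn g D) (hH : ContinuousOn H D)
    (hg' : ∀ x ∈ interior D, HasDerivAt g (g' x) x)
    (hH' : ∀ x ∈ interior D, HasDerivAt H (g' x ^ 2) x)
    (hid : MemLp id 2 μ) (hg2 : MemLp g 2 μ) (hH2 : MemLp H 2 μ) :
    Var[g; μ] ≤ cov[id, H; μ] := by
  refine variance_le_covariance_of_sq_sub_le hg2 hid hH2 ?_
  filter_upwards [Measure.quasiMeasurePreserving_fst.ae hμ,
    Measure.quasiMeasurePreserving_snd.ae hμ] with p hp₁ hp₂
  exact sq_sub_le_sub_mul_sub_of_hasDerivAt_sq hD hg hH hg' hH' hp₁ hp₂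

lemma memLp_of_continuousOn_isCompact {α E : Type*} [TopologicalSpace α] [MeasurableSpace α]
    [OpensMeasurableSpace α] [NormedAddCommGroup E] {μ : Measure α} [IsFiniteMeasure μ]
    {K : Set α} (hK : IsCompact K) (hKm : MeasurableSet K) (hμ : ∀ᵐ x ∂μ, x ∈ K)
    {f : α → E} (hf : ContinuousOn f K) (p : ENNReal) : MemLp f p μ := by
  obtain ⟨C, hC⟩ := hK.exists_bound_of_continuousOn hf
  refine MemLp.of_bound ?_ C (hμ.mono hC)
  rw [← Measure.restrict_eq_self_of_ae_mem hμ]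
  exact hf.aestronglyMeasurable_of_isCompact hK hKm

section Ultraspherical

/-- `∫ x in -1..1, (1 - x²) ^ (d/2 - 1)`, the constant `Zd` for a real dimension `d`. -/
def ultrasphericalNorm (d : ℝ) : ℝ := √π * Gamma (d / 2) / Gamma ((d + 1) / 2)

/-- The measure `nuMeas` for a real dimension `d`: the ultraspherical probability measure, with
density proportional to `(1 - x²) ^ (d/2 - 1)` on `(-1, 1)`. -/
def ultrasphericalMeasure (d : ℝ) : Measure ℝ :=
  (volume.restrict (Ioo (-1 : ℝ) 1)).withDensity
    fun x ↦ ENNReal.ofReal ((1 - x ^ 2) ^ (d / 2 - 1) / ultrasphericalNorm d)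

lemma one_sub_sq_pos {x : ℝ} (hx : x ∈ Ioo (-1 : ℝ) 1) : 0 < 1 - x ^ 2 := by
  nlinarith [hx.1, hx.2]

lemma integral_rpow_mul_one_sub_rpow {a b : ℝ} (ha : 0 < a) (hb : 0 < b) :
    ∫ x in (0 : ℝ)..1, x ^ (a - 1) * (1 - x) ^ (b - 1) = beta a b := by
  rw [beta_eq_betaIntegralReal a b ha hb, Complex.betaIntegral,
    ← Complex.ofReal_re (∫ x in (0 : ℝ)..1, _), ← intervalIntegral.integral_ofReal]
  congr 1
  refine intervalIntegral.integral_congr fun x hx ↦ ?_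
  rw [uIcc_of_le zero_le_one] at hx
  simp [Complex.ofReal_cpow hx.1, Complex.ofReal_cpow (sub_nonneg.2 hx.2)]

lemma integral_one_sub_sq_rpow_eq_beta {a : ℝ} (ha : 0 < a) :
    ∫ x in (-1 : ℝ)..1, (1 - x ^ 2) ^ (a - 1) = 2 ^ (2 * a - 1) * beta a a := by
  have hpow : (2 : ℝ) ^ (2 * a - 1) = 2 * 4 ^ (a - 1) := by
    rw [show (4 : ℝ) = 2 ^ (2 : ℝ) by norm_num, ← rpow_mul two_pos.le,
      mul_comm 2 (_ ^ _), ← rpow_add_one two_ne_zero]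
    ring_nf
  calc ∫ x in (-1 : ℝ)..1, (1 - x ^ 2) ^ (a - 1)
      = 2 * ∫ x in (0 : ℝ)..1, (1 - (2 * x - 1) ^ 2) ^ (a - 1) := by
        rw [intervalIntegral.integral_comp_mul_sub (fun x : ℝ ↦ (1 - x ^ 2) ^ (a - 1)) two_ne_zero,
          smul_eq_mul, mul_inv_cancel_left₀ two_ne_zero]
        norm_num
    _ = 2 * ∫ x in (0 : ℝ)..1, 4 ^ (a - 1) * (x ^ (a - 1) * (1 - x) ^ (a - 1)) := by
        congr 1
        refine intervalIntegral.integral_congr fun x hx ↦ ?_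
        rw [uIcc_of_le zero_le_one] at hx
        have hx₁ : 0 ≤ 1 - x := sub_nonneg.2 hx.2
        simp only [← mul_rpow hx.1 hx₁, ← mul_rpow zero_le_four (mul_nonneg hx.1 hx₁)]
        ring_nf
    _ = 2 ^ (2 * a - 1) * beta a a := by
        rw [intervalIntegral.integral_const_mul, integral_rpow_mul_one_sub_rpow ha ha, hpow,
          mul_assoc]

variable {d : ℝ}

lemma ultrasphericalNorm_pos (hd : 0 < d) : 0 < ultrasphericalNorm d :=
  div_pos (mul_pos (sqrt_pos.2 pi_pos) (Gamma_pos_of_pos (half_pos hd)))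
    (Gamma_pos_of_pos (half_pos (add_pos hd one_pos)))

lemma integral_one_sub_sq_rpow (hd : 0 < d) :
    ∫ x in (-1 : ℝ)..1, (1 - x ^ 2) ^ (d / 2 - 1) = ultrasphericalNorm d := by
  have hduplication : Gamma (d / 2) * Gamma ((d + 1) / 2) = Gamma d * 2 ^ (1 - d) * √π := by
    rw [add_div, Gamma_mul_Gamma_add_half, mul_div_cancel₀ d two_ne_zero]
  have hpow : (2 : ℝ) ^ (d - 1) * 2 ^ (1 - d) = 1 := by
    rw [← rpow_add two_pos, sub_add_sub_cancel, sub_self, rpow_zero]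
  have hGamma := (Gamma_pos_of_pos hd).ne'
  have hGamma' := (Gamma_pos_of_pos (half_pos (add_pos hd one_pos))).ne'
  rw [integral_one_sub_sq_rpow_eq_beta (half_pos hd), beta, ultrasphericalNorm, add_halves,
    mul_div_cancel₀ d two_ne_zero, ← mul_div_assoc, div_eq_div_iff hGamma hGamma']
  linear_combination 2 ^ (d - 1) * Gamma (d / 2) * hduplication +
    Gamma (d / 2) * Gamma d * √π * hpow

lemma intervalIntegrable_one_sub_sq_rpow (hd : 0 < d) :
    IntervalIntegrable (fun x : ℝ ↦ (1 - x ^ 2) ^ (d / 2 - 1)) volume (-1) 1 := by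
  -- The integral of a non-integrable function is `0` by convention, but this one is positive.
  by_contra hnot
  exact (ultrasphericalNorm_pos hd).ne
    ((intervalIntegral.integral_undef hnot).symm.trans (integral_one_sub_sq_rpow hd))

lemma integral_ultrasphericalMeasure (hd : 0 < d) (f : ℝ → ℝ) :
    ∫ x, f x ∂ultrasphericalMeasure d =
      (∫ x in (-1 : ℝ)..1, f x * (1 - x ^ 2) ^ (d / 2 - 1)) / ultrasphericalNorm d := by
  rw [ultrasphericalMeasure, integral_withDensity_eq_integral_toReal_smul (by fun_prop) (by simp),
    ← intervalIntegral.integral_div, intervalIntegral.integral_of_le (by norm_num),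
    integral_Ioc_eq_integral_Ioo]
  refine setIntegral_congr_fun measurableSet_Ioo fun x hx ↦ ?_
  have hdensity : 0 ≤ (1 - x ^ 2) ^ (d / 2 - 1) / ultrasphericalNorm d :=
    div_nonneg (rpow_nonneg (one_sub_sq_pos hx).le _) (ultrasphericalNorm_pos hd).le
  simp only [ENNReal.toReal_ofReal hdensity, smul_eq_mul]
  ring

lemma isProbabilityMeasure_ultrasphericalMeasure (hd : 0 < d) :
    IsProbabilityMeasure (ultrasphericalMeasure d) := by
  have hmass := integral_ultrasphericalMeasure hd fun _ ↦ 1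
  simp only [one_mul, integral_one_sub_sq_rpow hd, div_self (ultrasphericalNorm_pos hd).ne',
    integral_const, smul_eq_mul, mul_one] at hmass
  exact ⟨(ENNReal.toReal_eq_one_iff _).1 hmass⟩

lemma ae_mem_Ioo_ultrasphericalMeasure (d : ℝ) :
    ∀ᵐ x ∂ultrasphericalMeasure d, x ∈ Ioo (-1 : ℝ) 1 :=
  (withDensity_absolutelyContinuous _ _).ae_le (ae_restrict_mem measurableSet_Ioo)

lemma memLp_ultrasphericalMeasure (hd : 0 < d) {f : ℝ → ℝ}
    (hf : ContinuousOn f (Icc (-1) 1)) (p : ENNReal) : MemLp f p (ultrasphericalMeasure d) := by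
  have := isProbabilityMeasure_ultrasphericalMeasure hd
  exact memLp_of_continuousOn_isCompact isCompact_Icc measurableSet_Icc
    ((ae_mem_Ioo_ultrasphericalMeasure d).mono fun _ hx ↦ Ioo_subset_Icc_self hx) hf p

lemma hasDerivAt_one_sub_sq_rpow {x : ℝ} (hx : x ∈ Ioo (-1 : ℝ) 1) (d : ℝ) :
    HasDerivAt (fun x : ℝ ↦ (1 - x ^ 2) ^ (d / 2)) (-d * (x * (1 - x ^ 2) ^ (d / 2 - 1))) x := by
  have hbase : HasDerivAt (fun x : ℝ ↦ 1 - x ^ 2) (-(2 * x)) x := by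
    simpa using (hasDerivAt_pow 2 x).const_sub 1
  exact (hbase.rpow_const (Or.inl (one_sub_sq_pos hx).ne')).congr_deriv (by ring)

lemma mul_integral_id_mul_ultrasphericalMeasure (hd : 0 < d) {H h : ℝ → ℝ}
    (hH : ContinuousOn H (Icc (-1) 1)) (hH' : ∀ x ∈ Ioo (-1 : ℝ) 1, HasDerivAt H (h x) x)
    (hh : IntervalIntegrable h volume (-1) 1) :
    d * ∫ x, x * H x ∂ultrasphericalMeasure d =
      ∫ x, h x * (1 - x ^ 2) ∂ultrasphericalMeasure d := by
  have hw : Continuous fun x : ℝ ↦ (1 - x ^ 2) ^ (d / 2) :=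
    Continuous.rpow_const (by fun_prop) fun _ ↦ Or.inr (half_pos hd).le
  have hparts : ∫ x in (-1 : ℝ)..1, H x * (-d * (x * (1 - x ^ 2) ^ (d / 2 - 1))) =
      -∫ x in (-1 : ℝ)..1, h x * (1 - x ^ 2) ^ (d / 2) := by
    rw [intervalIntegral.integral_mul_deriv_eq_deriv_mul_of_hasDerivAt
      (u := H) (u' := h) (v := fun x ↦ (1 - x ^ 2) ^ (d / 2))
      (by simpa using hH) hw.continuousOn (by simpa using hH')
      (fun x hx ↦ hasDerivAt_one_sub_sq_rpow (by simpa using hx) d) hh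
      (((intervalIntegrable_one_sub_sq_rpow hd).continuousOn_mul continuousOn_id).const_mul _)]
    simp [(half_pos hd).ne']
  calc d * ∫ x, x * H x ∂ultrasphericalMeasure d
      = -(∫ x in (-1 : ℝ)..1, H x * (-d * (x * (1 - x ^ 2) ^ (d / 2 - 1)))) /
          ultrasphericalNorm d := by
        rw [integral_ultrasphericalMeasure hd, ← mul_div_assoc,
          ← intervalIntegral.integral_const_mul, ← intervalIntegral.integral_neg]
        congr! 3
        ring
    _ = (∫ x in (-1 : ℝ)..1, h x * (1 - x ^ 2) ^ (d / 2)) / ultrasphericalNorm d := by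
        rw [hparts, neg_neg]
    _ = ∫ x, h x * (1 - x ^ 2) ∂ultrasphericalMeasure d := by
        rw [integral_ultrasphericalMeasure hd]
        congr 1
        refine intervalIntegral.integral_congr_Ioo_of_le (by norm_num) fun x hx ↦ ?_
        rw [mul_assoc, mul_comm (1 - x ^ 2), ← rpow_add_one (one_sub_sq_pos hx).ne',
          sub_add_cancel]

lemma integral_id_ultrasphericalMeasure (hd : 0 < d) : ∫ x, x ∂ultrasphericalMeasure d = 0 := by
  have hparts := mul_integral_id_mul_ultrasphericalMeasure hd (H := fun _ ↦ 1) (h := fun _ ↦ 0)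
    continuousOn_const (fun x _ ↦ hasDerivAt_const x 1) intervalIntegrable_const
  simpa [hd.ne'] using hparts

lemma mul_covariance_id_ultrasphericalMeasure (hd : 0 < d) {H h : ℝ → ℝ}
    (hH : ContinuousOn H (Icc (-1) 1)) (hH' : ∀ x ∈ Ioo (-1 : ℝ) 1, HasDerivAt H (h x) x)
    (hh : IntervalIntegrable h volume (-1) 1) :
    d * cov[id, H; ultrasphericalMeasure d] =
      ∫ x, h x * (1 - x ^ 2) ∂ultrasphericalMeasure d := by
  have := isProbabilityMeasure_ultrasphericalMeasure hd
  rw [covariance_eq_sub (memLp_ultrasphericalMeasure hd continuousOn_id 2)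
    (memLp_ultrasphericalMeasure hd hH 2)]
  simpa [integral_id_ultrasphericalMeasure hd] using
    mul_integral_id_mul_ultrasphericalMeasure hd hH hH' hh

theorem ultraspherical_poincare_general (hd : 0 < d) {g : ℝ → ℝ}
    (hg : ContinuousOn g (Icc (-1) 1)) (hg' : ContDiffOn ℝ 1 g (Ioo (-1) 1))
    (hint : IntervalIntegrable (fun x ↦ deriv g x ^ 2) volume (-1) 1) :
    d * ∫ x, (g x - ∫ y, g y ∂ultrasphericalMeasure d) ^ 2 ∂ultrasphericalMeasure d ≤
      ∫ x, deriv g x ^ 2 * (1 - x ^ 2) ∂ultrasphericalMeasure d := by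
  have := isProbabilityMeasure_ultrasphericalMeasure hd
  set H : ℝ → ℝ := fun x ↦ ∫ t in (-1 : ℝ)..x, deriv g t ^ 2
  have hH : ContinuousOn H (Icc (-1) 1) := by
    simpa using intervalIntegral.continuousOn_primitive_interval' hint left_mem_uIcc
  have hderiv_g : ∀ x ∈ Ioo (-1 : ℝ) 1, HasDerivAt g (deriv g x) x := fun x hx ↦
    ((hg'.differentiableOn one_ne_zero).differentiableAt (isOpen_Ioo.mem_nhds hx)).hasDerivAt
  have hderiv_H : ∀ x ∈ Ioo (-1 : ℝ) 1, HasDerivAt H (deriv g x ^ 2) x := fun x hx ↦ by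
    have hcont := (hg'.continuousOn_deriv_of_isOpen isOpen_Ioo le_rfl).pow 2
    exact intervalIntegral.integral_hasDerivAt_right
      (hint.mono_set (uIcc_subset_uIcc_left (by simpa using Ioo_subset_Icc_self hx)))
      (hcont.stronglyMeasurableAtFilter isOpen_Ioo x hx)
      (hcont.continuousAt (isOpen_Ioo.mem_nhds hx))
  have hL2 {f : ℝ → ℝ} (hf : ContinuousOn f (Icc (-1) 1)) := memLp_ultrasphericalMeasure hd hf 2
  have hvar : Var[g; ultrasphericalMeasure d] ≤ cov[id, H; ultrasphericalMeasure d] :=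
    variance_le_covariance_id_of_hasDerivAt_sq (convex_Icc (-1) 1)
      ((ae_mem_Ioo_ultrasphericalMeasure d).mono fun _ hx ↦ Ioo_subset_Icc_self hx) hg hH
      (by rwa [interior_Icc]) (by rwa [interior_Icc]) (hL2 continuousOn_id) (hL2 hg) (hL2 hH)
  calc d * ∫ x, (g x - ∫ y, g y ∂ultrasphericalMeasure d) ^ 2 ∂ultrasphericalMeasure d
      = d * Var[g; ultrasphericalMeasure d] := by
        rw [variance_eq_integral (hL2 hg).aemeasurable]
    _ ≤ d * cov[id, H; ultrasphericalMeasure d] := mul_le_mul_of_nonneg_left hvar hd.le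
    _ = ∫ x, deriv g x ^ 2 * (1 - x ^ 2) ∂ultrasphericalMeasure d :=
        mul_covariance_id_ultrasphericalMeasure hd hH hderiv_H hint

end Ultraspherical

lemma intervalIntegrable_deriv_sq_of_contDiffOn_Icc {a b : ℝ} (hab : a < b) {g : ℝ → ℝ}
    (hg : ContDiffOn ℝ 1 g (Icc a b)) :
    IntervalIntegrable (fun x ↦ deriv g x ^ 2) volume a b := by
  have hcont : ContinuousOn (derivWithin g (Icc a b)) (uIcc a b) := by
    simpa [uIcc_of_le hab.le] using hg.continuousOn_derivWithin (uniqueDiffOn_Icc hab) le_rfl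
  refine (hcont.pow 2).intervalIntegrable.congr_uIoo fun x hx ↦ ?_
  rw [uIoo_of_le hab.le] at hx
  simp [derivWithin_of_mem_nhds (Icc_mem_nhds hx.1 hx.2)]

theorem ultraspherical_poincare (n : ℕ) (hn : 1 ≤ n)
    (g : ℝ → ℝ) (hg : ContDiffOn ℝ 1 g (Set.Icc (-1 : ℝ) 1)) :
    ∫ x, (deriv g x) ^ 2 * (1 - x ^ 2) ∂(nuMeas n) ≥
      (n : ℝ) * ∫ x, (g x - ∫ y, g y ∂(nuMeas n)) ^ 2 ∂(nuMeas n) :=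
  ultraspherical_poincare_general (Nat.cast_pos.2 hn) hg.continuousOn
    (hg.mono Ioo_subset_Icc_self) (intervalIntegrable_deriv_sq_of_contDiffOn_Icc (by norm_num) hg)
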